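/- arXiv:1506.06539 — 2 statements merged into one kernel-verified Lean document; each statement's English description precedes it below -/
import Mathlib

section
/- Fix c ∈ ℂ with c ≠ 0, N ≥ 1 and an index ℓ ∈ {1,…,N}. Let μ_1,…,μ_N and pairwise distinct λ_1,…,λ_N be complex numbers with μ_k ≠ λ_j and λ_m−λ_j±ic ≠ 0, and let λ_p, λ_s be admissible auxiliary parameters. Then det_N(δ_{jk}+U^{(1)}_{jk}) = −i(P_μ−P_λ)·det_N(E^ℓ), where P_λ = Σ_j λ_j, P_μ = Σ_j μ_j, and E^ℓ is the matrix with row ℓ equal to E^ℓ_{ℓk} = K(λ_p,λ_k)/(V⁺_ℓ−V⁻_ℓ) and E^ℓ_{jk} = δ_{jk} + [i/(V⁺_j−V⁻_j)]·Ξ_j·K(λ_j,λ_k) for j ≠ ℓ. -/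
open Complex Finset Matrix

namespace LL

noncomputable def Kk (c x y : ℂ) : ℂ := 2 * c / ((x - y) ^ 2 + c ^ 2)

noncomputable def Vp {N M : ℕ} (c : ℂ) (μ : Fin N → ℂ) (lam : Fin M → ℂ) (x : ℂ) : ℂ :=
  (∏ m, (μ m - x + I * c)) / ∏ m, (lam m - x + I * c)

noncomputable def Vm {N M : ℕ} (c : ℂ) (μ : Fin N → ℂ) (lam : Fin M → ℂ) (x : ℂ) : ℂ :=
  (∏ m, (μ m - x - I * c)) / ∏ m, (lam m - x - I * c)

noncomputable def Xi {N M : ℕ} (μ : Fin N → ℂ) (lam : Fin M → ℂ) (j : Fin M) : ℂ :=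
  (∏ m, (μ m - lam j)) / ∏ m ∈ Finset.univ.erase j, (lam m - lam j)

noncomputable def Umat {N M : ℕ} (c : ℂ) (μ : Fin N → ℂ) (lam : Fin M → ℂ) (lp ls : ℂ) :
    Matrix (Fin M) (Fin M) ℂ := fun j k =>
  I / (Vp c μ lam (lam j) - Vm c μ lam (lam j)) * Xi μ lam j *
    (Kk c (lam j) (lam k) - Kk c lp (lam k) * Kk c ls (lam j))

noncomputable def U1mat {N M : ℕ} (c : ℂ) (μ : Fin N → ℂ) (lam : Fin M → ℂ) (lp : ℂ) :
    Matrix (Fin M) (Fin M) ℂ := fun j k =>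
  I / (Vp c μ lam (lam j) - Vm c μ lam (lam j)) * Xi μ lam j *
    (Kk c (lam j) (lam k) - Kk c lp (lam k))

noncomputable def U2mat {N M : ℕ} (c : ℂ) (μ : Fin N → ℂ) (lam : Fin M → ℂ) (lp : ℂ) :
    Matrix (Fin M) (Fin M) ℂ := fun j k =>
  U1mat c μ lam lp j k + I / (Vp c μ lam (lam j) - Vm c μ lam (lam j)) * Kk c lp (lam k)

noncomputable def HR {N M : ℕ} (c sc : ℂ) (R : ℕ) (μ : Fin N → ℂ) (lam : Fin M → ℂ)
    (lp ls : ℂ) : ℂ :=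
  (I * sc) ^ R / (c ^ (2 * R - 1) * ((R - 1).factorial : ℂ)) * (-1 : ℂ) ^ (N * (R - 1)) *
    (∏ j, ∏ k, (lam j - lam k + I * c)) *
    (∏ j, ∏ k, (lam j - μ k)⁻¹) *
    (∏ j, (Vp c μ lam (lam j) - Vm c μ lam (lam j))) *
    (1 + Umat c μ lam lp ls).det /
    ((Vp c μ lam lp - Vm c μ lam lp) * (Vp c μ lam ls - Vm c μ lam ls))

noncomputable def Jcal {N : ℕ} (μ lam : Fin N → ℂ) : ℂ :=
  (∑ j, lam j - ∑ j, μ j) ^ 4 -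
    4 * (∑ j, lam j - ∑ j, μ j) * (∑ j, lam j ^ 3 - ∑ j, μ j ^ 3) +
    3 * (∑ j, lam j ^ 2 - ∑ j, μ j ^ 2) ^ 2

noncomputable def Fff {N : ℕ} (c : ℂ) (μ lam : Fin N → ℂ) (lp ls : ℂ) : ℂ :=
  (-1 : ℂ) ^ N * (Jcal μ lam / (6 * c)) *
    (∏ j, ∏ k, (lam j - lam k + I * c)) *
    (∏ j, ∏ k, (lam j - μ k)⁻¹) *
    (∏ j, (Vp c μ lam (lam j) - Vm c μ lam (lam j))) *
    (1 + Umat c μ lam lp ls).det /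
    ((Vp c μ lam lp - Vm c μ lam lp) * (Vp c μ lam ls - Vm c μ lam ls))

noncomputable def Tcal {N M : ℕ} (μ : Fin N → ℂ) (lam : Fin M → ℂ) : ℂ :=
  (1 / 2 : ℂ) * ((∑ j, lam j - ∑ j, μ j) ^ 2 - (∑ j, lam j ^ 2 - ∑ j, μ j ^ 2))

noncomputable def Gff {N M : ℕ} (c sc : ℂ) (μ : Fin N → ℂ) (lam : Fin M → ℂ) (lp ls : ℂ) : ℂ :=
  -I * (Tcal μ lam / (c * sc)) *
    (∏ j, ∏ k, (lam j - lam k + I * c)) *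
    (∏ j, ∏ k, (lam j - μ k)⁻¹) *
    (∏ j, (Vp c μ lam (lam j) - Vm c μ lam (lam j))) *
    (1 + Umat c μ lam lp ls).det /
    ((Vp c μ lam lp - Vm c μ lam lp) * (Vp c μ lam ls - Vm c μ lam ls))

noncomputable def fsc (c x y : ℂ) : ℂ := (x - y + I * c) / (x - y)

noncomputable def stringRap (cb : ℝ) (M : ℕ) (δ : Fin M → ℂ) (j : Fin M) : ℂ :=
  I * ((cb : ℂ) / 2) * ((M : ℂ) - 1 - 2 * (j.val : ℂ)) + I * δ j

end LL

open LL

/-!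
Let `A` be the matrix `δ_{jk} + i Ξ_j K(λ_j, λ_k) / (V⁺_j - V⁻_j)`. The row vector of the numbers
`w_j = V⁺_j - V⁻_j` annihilates `A`: expanding `∏ (μ_m - x) / ∏ (λ_m - x)` into partial fractions
at the `λ_j`, with residues governed by `Ξ_j`, and subtracting its values at `x = λ_k ∓ ic` gives
`V⁺_k - V⁻_k = -i ∑_j Ξ_j K(λ_j, λ_k)`. Now `1 + U⁽¹⁾` is the rank-one perturbation `A - u κᵀ` with
`u_j = i Ξ_j / w_j` and `κ_k = K(λ_p, λ_k)`. Replacing its row `ℓ` by the `w`-combination of all its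
rows, which is `-(w · u) κ`, multiplies the determinant by `w_ℓ`, and once row `ℓ` is a multiple of
`κ` the perturbation of the other rows can be cleared. Finally `w · u = i ∑ Ξ_j = i (P_μ - P_λ)`,
the sum of the residues of the partial fraction expansion.
-/

section RankOnePerturbation

variable {n R : Type*} [Fintype n] [DecidableEq n] [CommRing R]

theorem det_updateRow_sub_vecMulVec (A : Matrix n n R) (u v : n → R) (l : n) :
    ((A - vecMulVec u v).updateRow l v).det = (A.updateRow l v).det := by
  refine det_eq_of_forall_row_eq_smul_add_const (Function.update (-u) l 0) l (by simp) fun i j => ?_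
  rcases eq_or_ne i l with rfl | hi
  · simp
  · simp [hi, vecMulVec_apply, sub_eq_add_neg]

theorem mul_det_sub_vecMulVec_of_vecMul_eq_zero {A : Matrix n n R} {w : n → R} (hw : w ᵥ* A = 0)
    (u v : n → R) (l : n) :
    w l * (A - vecMulVec u v).det = -(w ⬝ᵥ u) * (A.updateRow l v).det := by
  have hrow : ∑ i, w i • (A - vecMulVec u v) i = -(w ⬝ᵥ u) • v := by
    rw [← vecMul_eq_sum, vecMul_sub, hw, vecMul_vecMulVec, zero_sub, neg_smul]
  rw [← smul_eq_mul, ← det_updateRow_sum, hrow, det_updateRow_smul, det_updateRow_sub_vecMulVec]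

end RankOnePerturbation

section PartialFractions

open Polynomial Lagrange

theorem degree_sub_nodal_lt {R ι : Type*} [CommRing R] [Nontrivial R] {s : Finset ι} (v : ι → R)
    {p : R[X]} (hp : p.Monic) (hdeg : p.natDegree = #s) : (p - nodal s v).degree < #s := by
  have hpdeg : p.degree = #s := by rw [degree_eq_natDegree hp.ne_zero, hdeg]
  rw [← hpdeg]
  exact degree_sub_lt_left (by rw [hpdeg, degree_nodal]) hp.ne_zero
    (hp.leadingCoeff.trans nodal_monic.leadingCoeff.symm)

variable {F ι : Type*} [Field F] [DecidableEq ι] {s : Finset ι} {v : ι → F} {p : F[X]}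

theorem sum_nodalWeight_mul_eval_eq_nextCoeff_add_sum (hv : Set.InjOn v s) (hp : p.Monic)
    (hdeg : p.natDegree = #s) :
    ∑ i ∈ s, nodalWeight s v i * p.eval (v i) = p.nextCoeff + ∑ i ∈ s, v i := by
  rcases s.eq_empty_or_nonempty with rfl | hs
  · simp [nextCoeff, hdeg]
  have hcoeff : (p - nodal s v).coeff (#s - 1) = p.nextCoeff + ∑ i ∈ s, v i := by
    rw [coeff_sub, nodal_eq, prod_X_sub_C_coeff_card_pred _ _ hs.card_pos, sub_neg_eq_add, ← hdeg,
      nextCoeff_of_natDegree_pos (hdeg ▸ hs.card_pos)]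
  rw [← hcoeff, coeff_eq_sum hv (degree_sub_nodal_lt v hp hdeg)]
  refine sum_congr rfl fun i hi => ?_
  rw [eval_sub, eval_nodal_at_node hi, sub_zero, nodalWeight, prod_inv_distrib, mul_comm,
    div_eq_mul_inv]

theorem eval_div_eval_nodal_eq_one_add_sum (hv : Set.InjOn v s) (hp : p.Monic)
    (hdeg : p.natDegree = #s) {x : F} (hx : ∀ i ∈ s, x ≠ v i) :
    p.eval x / (nodal s v).eval x = 1 + ∑ i ∈ s, nodalWeight s v i * p.eval (v i) / (x - v i) := by
  have hinterp : p - nodal s v = interpolate s v fun i => p.eval (v i) :=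
    eq_interpolate_of_eval_eq _ hv (degree_sub_nodal_lt v hp hdeg) fun i hi => by
      rw [eval_sub, eval_nodal_at_node hi, sub_zero]
  have heval := congrArg (eval x) hinterp
  rw [eval_sub, eval_interpolate_not_at_node _ hx, sub_eq_iff_eq_add'] at heval
  rw [heval, add_div, div_self (eval_nodal_not_at_node hx),
    mul_div_cancel_left₀ _ (eval_nodal_not_at_node hx)]
  simp only [div_eq_mul_inv, mul_right_comm]

end PartialFractions

namespace LL

section

open Lagrange

variable {N : ℕ} {c : ℂ} {μ lam : Fin N → ℂ}

theorem Xi_eq_neg_nodalWeight_mul_eval_nodal (μ lam : Fin N → ℂ) (j : Fin N) :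
    Xi μ lam j = -(nodalWeight univ lam j * (nodal univ μ).eval (lam j)) := by
  have hsign : (-1 : ℂ) ^ N = -(-1) ^ (N - 1) := by
    rw [← pow_sub_one_mul j.pos.ne', mul_neg_one]
  have hμ : ∏ m, (μ m - lam j) = (-1) ^ N * ∏ m, (lam j - μ m) := by
    simp_rw [← neg_sub (lam j), prod_neg, card_univ, Fintype.card_fin]
  have hlam : ∏ m ∈ univ.erase j, (lam m - lam j) =
      (-1) ^ (N - 1) * ∏ m ∈ univ.erase j, (lam j - lam m) := by
    simp_rw [← neg_sub (lam j), prod_neg, card_erase_of_mem (mem_univ j), card_univ,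
      Fintype.card_fin]
  rw [Xi, hμ, hlam, hsign, neg_mul, neg_div, mul_div_mul_left _ _ (by simp), eval_nodal,
    nodalWeight, prod_inv_distrib, mul_comm, div_eq_mul_inv]

theorem sum_Xi (hinj : Function.Injective lam) :
    ∑ j, Xi μ lam j = ∑ j, μ j - ∑ j, lam j := by
  simp_rw [Xi_eq_neg_nodalWeight_mul_eval_nodal, sum_neg_distrib]
  rw [sum_nodalWeight_mul_eval_eq_nextCoeff_add_sum hinj.injOn nodal_monic natDegree_nodal,
    nodal_eq, Polynomial.prod_X_sub_C_nextCoeff]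
  ring

theorem prod_sub_div_prod_sub_eq_one_add_sum_Xi (hinj : Function.Injective lam) {x : ℂ}
    (hx : ∀ j, lam j - x ≠ 0) :
    (∏ m, (μ m - x)) / ∏ m, (lam m - x) = 1 + ∑ j, Xi μ lam j / (lam j - x) := by
  have hflip : (∏ m, (μ m - x)) / ∏ m, (lam m - x) =
      (nodal univ μ).eval x / (nodal univ lam).eval x := by
    simp_rw [eval_nodal, ← prod_div_distrib, ← neg_sub x, neg_div_neg_eq]
  rw [hflip, eval_div_eval_nodal_eq_one_add_sum hinj.injOn nodal_monic natDegree_nodal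
    fun j _ => (sub_ne_zero.1 (hx j)).symm]
  simp_rw [Xi_eq_neg_nodalWeight_mul_eval_nodal, ← neg_sub x, neg_div_neg_eq]

theorem Vp_eq_one_add_sum_Xi (hinj : Function.Injective lam) {x : ℂ}
    (hx : ∀ j, lam j - x + I * c ≠ 0) :
    Vp c μ lam x = 1 + ∑ j, Xi μ lam j / (lam j - x + I * c) := by
  simp_rw [sub_add] at hx ⊢
  simp_rw [Vp, sub_add]
  exact prod_sub_div_prod_sub_eq_one_add_sum_Xi hinj hx

theorem Vm_eq_one_add_sum_Xi (hinj : Function.Injective lam) {x : ℂ}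
    (hx : ∀ j, lam j - x - I * c ≠ 0) :
    Vm c μ lam x = 1 + ∑ j, Xi μ lam j / (lam j - x - I * c) := by
  simp_rw [sub_sub] at hx ⊢
  simp_rw [Vm, sub_sub]
  exact prod_sub_div_prod_sub_eq_one_add_sum_Xi hinj hx

theorem inv_sub_inv_eq_neg_I_mul_Kk {x y : ℂ} (hp : x - y + I * c ≠ 0) (hm : x - y - I * c ≠ 0) :
    (x - y + I * c)⁻¹ - (x - y - I * c)⁻¹ = -I * Kk c x y := by
  have hfactor : (x - y) ^ 2 + c ^ 2 = (x - y + I * c) * (x - y - I * c) := by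
    linear_combination c ^ 2 * I_sq
  rw [Kk, hfactor]
  field_simp
  ring

theorem Vp_sub_Vm_eq_neg_I_mul_sum (hinj : Function.Injective lam) {x : ℂ}
    (hx : ∀ j, lam j - x + I * c ≠ 0 ∧ lam j - x - I * c ≠ 0) :
    Vp c μ lam x - Vm c μ lam x = -I * ∑ j, Xi μ lam j * Kk c (lam j) x := by
  rw [Vp_eq_one_add_sum_Xi hinj fun j => (hx j).1, Vm_eq_one_add_sum_Xi hinj fun j => (hx j).2,
    add_sub_add_left_eq_sub, ← sum_sub_distrib, mul_sum]
  refine sum_congr rfl fun j _ => ?_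
  rw [div_eq_mul_inv, div_eq_mul_inv, ← mul_sub, inv_sub_inv_eq_neg_I_mul_Kk (hx j).1 (hx j).2,
    mul_left_comm]

end

section

variable {N M : ℕ}

/-- The difference `V⁺_j - V⁻_j`, as a vector in `j`. -/
noncomputable def Vdiff (c : ℂ) (μ : Fin N → ℂ) (lam : Fin M → ℂ) : Fin M → ℂ := fun j =>
  Vp c μ lam (lam j) - Vm c μ lam (lam j)

/-- The prefactor `i Ξ_j / (V⁺_j - V⁻_j)` common to row `j` of `U⁽¹⁾` and of `E^ℓ`. -/
noncomputable def rowCoeff (c : ℂ) (μ : Fin N → ℂ) (lam : Fin M → ℂ) : Fin M → ℂ := fun j =>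
  I / Vdiff c μ lam j * Xi μ lam j

/-- The matrix `δ_{jk} + i Ξ_j K(λ_j, λ_k) / (V⁺_j - V⁻_j)`, of which `1 + U⁽¹⁾` is a rank-one
perturbation and `E^ℓ` a modification of row `ℓ`. -/
noncomputable def kernelMat (c : ℂ) (μ : Fin N → ℂ) (lam : Fin M → ℂ) : Matrix (Fin M) (Fin M) ℂ :=
  1 + Matrix.of fun j k => rowCoeff c μ lam j * Kk c (lam j) (lam k)

theorem one_add_U1mat (c : ℂ) (μ : Fin N → ℂ) (lam : Fin M → ℂ) (lp : ℂ) :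
    1 + U1mat c μ lam lp =
      kernelMat c μ lam - vecMulVec (rowCoeff c μ lam) fun k => Kk c lp (lam k) := by
  ext j k
  simp only [kernelMat, U1mat, rowCoeff, Vdiff, Matrix.add_apply, Matrix.sub_apply, vecMulVec_apply,
    Matrix.of_apply]
  ring

theorem updateRow_kernelMat (c : ℂ) (μ : Fin N → ℂ) (lam : Fin M → ℂ) (l : Fin M)
    (κ : Fin M → ℂ) :
    (kernelMat c μ lam).updateRow l ((Vdiff c μ lam l)⁻¹ • κ) =
      Matrix.of fun j k =>
        if j = l then κ k / (Vp c μ lam (lam l) - Vm c μ lam (lam l))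
        else (if j = k then (1 : ℂ) else 0) +
          I / (Vp c μ lam (lam j) - Vm c μ lam (lam j)) * Xi μ lam j * Kk c (lam j) (lam k) := by
  ext j k
  simp only [updateRow_apply, kernelMat, rowCoeff, Vdiff, Matrix.add_apply, Matrix.one_apply,
    Matrix.of_apply, Pi.smul_apply, smul_eq_mul, inv_mul_eq_div]

end

section

variable {N : ℕ} {c : ℂ} {μ lam : Fin N → ℂ}

theorem Vdiff_mul_rowCoeff {j : Fin N} (hV : Vdiff c μ lam j ≠ 0) :
    Vdiff c μ lam j * rowCoeff c μ lam j = I * Xi μ lam j := by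
  rw [rowCoeff, ← mul_assoc, mul_div_cancel₀ _ hV]

theorem Vdiff_dotProduct_rowCoeff (hinj : Function.Injective lam)
    (hV : ∀ j, Vdiff c μ lam j ≠ 0) :
    Vdiff c μ lam ⬝ᵥ rowCoeff c μ lam = I * (∑ j, μ j - ∑ j, lam j) := by
  simp_rw [dotProduct, Vdiff_mul_rowCoeff (hV _), ← mul_sum, sum_Xi hinj]

theorem Vdiff_vecMul_kernelMat (hinj : Function.Injective lam)
    (hpm : ∀ j k, lam j - lam k + I * c ≠ 0 ∧ lam j - lam k - I * c ≠ 0)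
    (hV : ∀ j, Vdiff c μ lam j ≠ 0) :
    Vdiff c μ lam ᵥ* kernelMat c μ lam = 0 := by
  rw [kernelMat, vecMul_add, vecMul_one]
  ext k
  have hVk : Vdiff c μ lam k = -I * ∑ j, Xi μ lam j * Kk c (lam j) (lam k) :=
    Vp_sub_Vm_eq_neg_I_mul_sum hinj fun j => hpm j k
  simp only [Pi.add_apply, vecMul, dotProduct, Matrix.of_apply, ← mul_assoc,
    Vdiff_mul_rowCoeff (hV _), Pi.zero_apply]
  simp_rw [mul_assoc, ← mul_sum]
  rw [hVk, neg_mul, neg_add_cancel]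

end

end LL

theorem det_U1_eq_momentum_det_E_general {N : ℕ} {c : ℂ} {μ lam : Fin N → ℂ}
    (hinj : Function.Injective lam)
    (hpm : ∀ j k, lam j - lam k + I * c ≠ 0 ∧ lam j - lam k - I * c ≠ 0)
    (hV : ∀ j, Vp c μ lam (lam j) ≠ Vm c μ lam (lam j)) (l : Fin N) (κ : Fin N → ℂ) :
    (kernelMat c μ lam - vecMulVec (rowCoeff c μ lam) κ).det =
      -I * (∑ j, μ j - ∑ j, lam j) *
        ((kernelMat c μ lam).updateRow l ((Vdiff c μ lam l)⁻¹ • κ)).det := by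
  have hV' : ∀ j, Vdiff c μ lam j ≠ 0 := fun j => sub_ne_zero.2 (hV j)
  have hdet := mul_det_sub_vecMulVec_of_vecMul_eq_zero (Vdiff_vecMul_kernelMat hinj hpm hV')
    (rowCoeff c μ lam) κ l
  rw [Vdiff_dotProduct_rowCoeff hinj hV', ← neg_mul] at hdet
  rw [det_updateRow_smul, mul_left_comm, ← hdet, inv_mul_cancel_left₀ (hV' l)]

/-- Companion row-replacement identity: `det_N(δ+U^{(1)}) = −i(P_μ−P_λ)·det_N(E^ℓ)`, where
row `ℓ` of `E^ℓ` is `K(λ_p,λ_k)/(V⁺_ℓ−V⁻_ℓ)` and the other rows are those of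
`δ_{jk} + (i/(V⁺_j−V⁻_j))·Ξ_j·K(λ_j,λ_k)`. -/
theorem det_U1_eq_momentum_det_E {N : ℕ} (hN : 1 ≤ N) (c : ℂ) (hc : c ≠ 0) (l : Fin N)
    (μ lam : Fin N → ℂ) (hinj : Function.Injective lam)
    (hmulam : ∀ k j, μ k ≠ lam j)
    (hpm : ∀ j k, lam j - lam k + I * c ≠ 0 ∧ lam j - lam k - I * c ≠ 0)
    (lp ls : ℂ)
    (hp1 : ∀ j, (lp - lam j) ^ 2 + c ^ 2 ≠ 0)
    (hs1 : ∀ j, (ls - lam j) ^ 2 + c ^ 2 ≠ 0)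
    (hV : ∀ j, Vp c μ lam (lam j) ≠ Vm c μ lam (lam j)) :
    (1 + U1mat c μ lam lp).det =
      -I * (∑ j, μ j - ∑ j, lam j) *
        (Matrix.of fun j k : Fin N =>
          if j = l then
            Kk c lp (lam k) / (Vp c μ lam (lam l) - Vm c μ lam (lam l))
          else
            (if j = k then (1 : ℂ) else 0) +
              I / (Vp c μ lam (lam j) - Vm c μ lam (lam j)) * Xi μ lam j *
                Kk c (lam j) (lam k)).det := by
  rw [one_add_U1mat, ← updateRow_kernelMat c μ lam l fun k => Kk c lp (lam k)]
  exact det_U1_eq_momentum_det_E_general hinj hpm hV l _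
end

section
/- Fix c̄ > 0, set c = −c̄, fix √c = i√c̄, integers R ≥ 1 and N ≥ 0, and set M = N+R. Let λ_j(δ) = i(c̄/2)(M+1−2j) + iδ_j for j = 1,…,M, and let μ_1,…,μ_N be fixed complex numbers with μ_m² + (c̄²/4)(M−1)² ≠ 0 for all m and μ_k ∉ {i(c̄/2)(M+1−2j) : j = 1,…,M}. Let λ_p, λ_s be fixed admissible auxiliary parameters. Then, as (δ_1,…,δ_M) → 0 in ℂ^M through values for which the expression is defined, H_R(μ_1,…,μ_N; λ_1(δ),…,λ_M(δ); λ_p,λ_s) → (−1)^{N+R}·(i√c)^R·c^{2N}·[(N+R)/(R−1)!]·[(N+R−1)!]² / ∏_{m=1}^{N}(μ_m² + (c̄²/4)(N+R−1)²). -/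
open Complex Finset Matrix

open LL

/-!
Multiplying `1 + U` on the left by `diag (V⁺ - V⁻)` and on the right by `diag Ξ`, where `Ξ j` is
the quotient `∏ (μ - λ j) / ∏ (λ - λ j)`, makes it a symmetric weighted Laplacian plus a rank-one
matrix: partial fractions in `x` give `∑ k, Ξ k * K(x, λ k) = i (V⁺(x) - V⁻(x))`, so the rows of
the `K`-part sum to the diagonal, and the rank-one part sums to the two factors `V⁺ - V⁻` at `λ_p`
and `λ_s` in the denominator of `H_R`, which therefore cancel. By the matrix-tree theorem, what is
left of the determinant is that of the reduced Laplacian, taken in the basis of cuts of the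
index set into an initial and a final segment.

Near a string, the only weights that blow up are those between neighbours, with a pole in the gap
`λ_j - λ_{j+1} + i c`. Each cut separates exactly one neighbouring pair, and the prefactor of the
determinant contains each vanishing gap exactly once. Multiplying every row by its gap thus gives
a matrix with a diagonal limit, and the remaining products over the string are factorials.
-/

namespace LL

section Laplacian

variable {R : Type*} [CommRing R]

/-- The Laplacian of the complete graph on `ι` with edge weights `W`; the diagonal of `W` cancels
out. -/
def weightedLaplacian {ι : Type*} [Fintype ι] [DecidableEq ι] (W : Matrix ι ι R) : Matrix ι ι R :=
  diagonal (fun j => ∑ k, W j k) - W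

lemma isSymm_weightedLaplacian {ι : Type*} [Fintype ι] [DecidableEq ι] {W : Matrix ι ι R}
    (hW : W.IsSymm) : (weightedLaplacian W).IsSymm :=
  (isSymm_diagonal _).sub hW

section LinearOrder

variable {ι : Type*} [Fintype ι] [LinearOrder ι]

/-- The zeta matrix of a finite linear order: multiplying by it on the left replaces the rows of a
matrix by their partial sums. -/
def partialSumMatrix (R ι : Type*) [CommRing R] [LinearOrder ι] : Matrix ι ι R :=
  of fun a j => if j ≤ a then 1 else 0

lemma det_partialSumMatrix : (partialSumMatrix R ι).det = 1 := by
  rw [det_of_isLowerTriangular]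
  · simp [partialSumMatrix]
  · intro a j (haj : a < j)
    simp [partialSumMatrix, haj.not_ge]

variable [LocallyFiniteOrderBot ι]

lemma partialSumMatrix_mulVec (v : ι → R) (a : ι) :
    (partialSumMatrix R ι *ᵥ v) a = ∑ j ∈ Iic a, v j := by
  simp [partialSumMatrix, mulVec, dotProduct, ← sum_filter, ← filter_ge_eq_Iic]

lemma partialSumMatrix_mul_mul_transpose (C : Matrix ι ι R) (a b : ι) :
    (partialSumMatrix R ι * C * (partialSumMatrix R ι)ᵀ) a b =
      ∑ j ∈ Iic a, ∑ k ∈ Iic b, C j k := by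
  rw [Matrix.mul_assoc]
  simp [Matrix.mul_apply, partialSumMatrix, ← sum_filter, ← filter_ge_eq_Iic]

variable [LocallyFiniteOrderTop ι]

/-- The total weight of the edges that cross both the cut just above `a` and the cut just
above `b`. -/
def cutSum (W : Matrix ι ι R) (a b : ι) : R :=
  ∑ j ∈ Iic (min a b), ∑ k ∈ Ioi (max a b), W j k

lemma sum_Iic_weightedLaplacian (W : Matrix ι ι R) {j b : ι} (hj : j ≤ b) :
    ∑ k ∈ Iic b, weightedLaplacian W j k = ∑ k ∈ Ioi b, W j k := by
  have hsplit : ∑ k, W j k = ∑ k ∈ Iic b, W j k + ∑ k ∈ Ioi b, W j k := by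
    rw [← sum_filter_add_sum_filter_not univ (· ≤ b)]
    simp [filter_ge_eq_Iic, filter_lt_eq_Ioi]
  simp [weightedLaplacian, diagonal_apply, hj, hsplit]

lemma sum_Iic_sum_Iic_weightedLaplacian {W : Matrix ι ι R} (hW : W.IsSymm) (a b : ι) :
    ∑ j ∈ Iic a, ∑ k ∈ Iic b, weightedLaplacian W j k = cutSum W a b := by
  wlog hab : a ≤ b generalizing a b
  · rw [cutSum, min_comm, max_comm, ← cutSum, ← this b a (le_of_not_ge hab)]
    refine sum_comm.trans (sum_congr rfl fun k _ => sum_congr rfl fun j _ => ?_)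
    exact (isSymm_weightedLaplacian hW).apply k j
  rw [cutSum, min_eq_left hab, max_eq_right hab]
  exact sum_congr rfl fun j hj => sum_Iic_weightedLaplacian W ((mem_Iic.1 hj).trans hab)

end LinearOrder

lemma det_add_vecMulVec_of_last_eq_zero {n : ℕ} {G : Matrix (Fin (n + 1)) (Fin (n + 1)) R}
    (hrow : ∀ k, G (Fin.last n) k = 0) (hcol : ∀ j, G j (Fin.last n) = 0)
    (a b : Fin (n + 1) → R) :
    (G + vecMulVec a b).det =
      a (Fin.last n) * b (Fin.last n) * (G.submatrix Fin.castSucc Fin.castSucc).det := by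
  let e : Fin n ⊕ Fin 1 ≃ Fin (n + 1) := finSumFinEquiv
  have e_inl (i) : e (Sum.inl i) = Fin.castSucc i := rfl
  have e_inr (i) : e (Sum.inr i) = Fin.last n := by ext; simp [e]
  have factorization : (G + vecMulVec a b).submatrix e e =
      fromBlocks 1 (of fun i _ => a (Fin.castSucc i)) 0 (of fun _ _ => a (Fin.last n)) *
        (fromBlocks (G.submatrix Fin.castSucc Fin.castSucc) 0 0 1 *
          fromBlocks 1 0 (of fun _ i => b (Fin.castSucc i)) (of fun _ _ => b (Fin.last n))) := by
    rw [fromBlocks_multiply, fromBlocks_multiply]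
    ext i j
    rcases i with i | i <;> rcases j with j | j <;>
      simp [e_inl, e_inr, hrow, hcol, Matrix.mul_apply, vecMulVec_apply]
  rw [← det_submatrix_equiv_self e, factorization, det_mul, det_mul, det_fromBlocks_zero₂₁,
    det_fromBlocks_zero₁₂, det_fromBlocks_zero₁₂]
  simp only [det_one, det_fin_one, of_apply, one_mul, mul_one]
  ring

/-- The reduced Laplacian in the basis of elementary cuts: its rows and columns are indexed by the
`n` cuts of `Fin (n + 1)` into an initial and a final segment. -/
def cutMatrix {n : ℕ} (W : Matrix (Fin (n + 1)) (Fin (n + 1)) R) : Matrix (Fin n) (Fin n) R :=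
  of fun a b => cutSum W a.castSucc b.castSucc

lemma cutSum_last_left {n : ℕ} (W : Matrix (Fin (n + 1)) (Fin (n + 1)) R) (b : Fin (n + 1)) :
    cutSum W (Fin.last n) b = 0 := by
  simp [cutSum, ← Fin.top_eq_last]

lemma cutSum_last_right {n : ℕ} (W : Matrix (Fin (n + 1)) (Fin (n + 1)) R) (a : Fin (n + 1)) :
    cutSum W a (Fin.last n) = 0 := by
  rw [cutSum, min_comm, max_comm, ← cutSum, cutSum_last_left]

/-- Weighted matrix-tree theorem in cut coordinates: conjugating by partial sums turns the Laplacian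
into `cutMatrix W` bordered by zeros, so that the rank-one term only contributes its corner. -/
theorem det_weightedLaplacian_add_vecMulVec {n : ℕ} {W : Matrix (Fin (n + 1)) (Fin (n + 1)) R}
    (hW : W.IsSymm) (u v : Fin (n + 1) → R) :
    (weightedLaplacian W + vecMulVec u v).det = (∑ j, u j) * (∑ j, v j) * (cutMatrix W).det := by
  set T := partialSumMatrix R (Fin (n + 1)) with hT
  have hL (a b) : (T * weightedLaplacian W * Tᵀ) a b = cutSum W a b := by
    rw [partialSumMatrix_mul_mul_transpose, sum_Iic_sum_Iic_weightedLaplacian hW]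
  have hconj : T * (weightedLaplacian W + vecMulVec u v) * Tᵀ =
      T * weightedLaplacian W * Tᵀ + vecMulVec (T *ᵥ u) (T *ᵥ v) := by
    rw [Matrix.mul_add, Matrix.add_mul, mul_vecMulVec, vecMulVec_mul, vecMul_transpose]
  have hlast (w : Fin (n + 1) → R) : (T *ᵥ w) (Fin.last n) = ∑ j, w j := by
    rw [partialSumMatrix_mulVec, ← Fin.top_eq_last, Iic_top]
  calc (weightedLaplacian W + vecMulVec u v).det
      = (T * (weightedLaplacian W + vecMulVec u v) * Tᵀ).det := by
        rw [det_mul, det_mul, det_transpose, hT, det_partialSumMatrix, one_mul, mul_one]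
    _ = (∑ j, u j) * (∑ j, v j) *
          ((T * weightedLaplacian W * Tᵀ).submatrix Fin.castSucc Fin.castSucc).det := by
        rw [hconj, det_add_vecMulVec_of_last_eq_zero, hlast, hlast]
        · exact fun k => (hL _ _).trans (cutSum_last_left W k)
        · exact fun j => (hL _ _).trans (cutSum_last_right W j)
    _ = (∑ j, u j) * (∑ j, v j) * (cutMatrix W).det := by
        congr 2
        ext a b
        exact hL _ _

end Laplacian

section PartialFractions

lemma prod_sub_div_prod_sub_eq_sum {K ι κ : Type*} [Field K] [Fintype ι] [Fintype κ]
    [DecidableEq κ] (hcard : Fintype.card ι < Fintype.card κ) (a : ι → K) {b : κ → K}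
    (hb : Function.Injective b) {z : K} (hz : ∀ j, b j ≠ z) :
    (∏ m, (a m - z)) / ∏ j, (b j - z) =
      ∑ j, (∏ m, (a m - b j)) / (∏ k ∈ univ.erase j, (b k - b j)) / (b j - z) := by
  -- Reflecting nodes and argument makes the factors monic without introducing signs.
  set P : Polynomial K := ∏ m, (Polynomial.X + Polynomial.C (a m)) with hP
  have eval_P (x : K) : P.eval (-x) = ∏ m, (a m - x) := by
    simp [hP, Polynomial.eval_prod, neg_add_eq_sub]
  have degree_P : P.degree < #(univ : Finset κ) := by
    rw [hP, Polynomial.degree_prod]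
    simpa using hcard
  have eval_at := Lagrange.eval_interpolate_not_at_node (s := univ) (v := fun j => -b j) (x := -z)
    (fun j => P.eval (-b j)) (fun j _ h => hz j (neg_injective h).symm)
  have nodes_injOn : Set.InjOn (fun j => -b j) (univ : Finset κ) := (neg_injective.comp hb).injOn
  rw [← Lagrange.eq_interpolate nodes_injOn degree_P, Lagrange.eval_nodal] at eval_at
  simp only [eval_P, Lagrange.nodalWeight, neg_sub_neg] at eval_at
  rw [eval_at, mul_div_cancel_left₀ _ (prod_ne_zero_iff.2 fun j _ => sub_ne_zero.2 (hz j))]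
  refine sum_congr rfl fun j _ => ?_
  rw [prod_inv_distrib]
  ring

variable {N M : ℕ}

lemma Kk_comm (c x y : ℂ) : Kk c x y = Kk c y x := by
  rw [Kk, Kk, sub_sq_comm]

lemma sq_add_sq_eq_mul (w c : ℂ) : w ^ 2 + c ^ 2 = (w + I * c) * (w - I * c) := by
  linear_combination c ^ 2 * I_sq

lemma sum_Xi_mul_Kk (hNM : N < M) {c : ℂ} (μ : Fin N → ℂ) {lam : Fin M → ℂ}
    (hinj : Function.Injective lam) {x : ℂ} (hx : ∀ j, (x - lam j) ^ 2 + c ^ 2 ≠ 0) :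
    ∑ j, Xi μ lam j * Kk c x (lam j) = I * (Vp c μ lam x - Vm c μ lam x) := by
  have hfactor (j) : (x - lam j) ^ 2 + c ^ 2 = (lam j - (x - I * c)) * (lam j - (x + I * c)) := by
    rw [sq_add_sq_eq_mul]; ring
  have hminus (j) : lam j - (x - I * c) ≠ 0 := fun h => hx j (by rw [hfactor, h, zero_mul])
  have hplus (j) : lam j - (x + I * c) ≠ 0 := fun h => hx j (by rw [hfactor, h, mul_zero])
  have hcard : Fintype.card (Fin N) < Fintype.card (Fin M) := by simpa
  have hVp : Vp c μ lam x = ∑ j, Xi μ lam j / (lam j - (x - I * c)) := by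
    simp only [Vp, Xi, sub_add, ← prod_sub_div_prod_sub_eq_sum hcard μ hinj
      fun j => sub_ne_zero.1 (hminus j)]
  have hVm : Vm c μ lam x = ∑ j, Xi μ lam j / (lam j - (x + I * c)) := by
    simp only [Vm, Xi, sub_sub, ← prod_sub_div_prod_sub_eq_sum hcard μ hinj
      fun j => sub_ne_zero.1 (hplus j)]
  rw [hVp, hVm, ← sum_sub_distrib, mul_sum]
  refine sum_congr rfl fun j _ => ?_
  rw [Kk, hfactor, div_sub_div _ _ (hminus j) (hplus j), ← mul_div_assoc, ← mul_div_assoc]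
  congr 1
  linear_combination 2 * c * Xi μ lam j * I_sq

lemma Xi_ne_zero {μ : Fin N → ℂ} {lam : Fin M → ℂ} (hinj : Function.Injective lam)
    (hμ : ∀ k j, μ k ≠ lam j) (j : Fin M) : Xi μ lam j ≠ 0 :=
  div_ne_zero (prod_ne_zero_iff.2 fun k _ => sub_ne_zero.2 (hμ k j))
    (prod_ne_zero_iff.2 fun _ hm => sub_ne_zero.2 (hinj.ne (ne_of_mem_erase hm)))

end PartialFractions

section ExactReduction

variable {N M n : ℕ}

/-- The rapidities at which every denominator occurring in `HR c sc R μ lam lp ls` is nonzero, so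
that the determinant formula is free of junk values. -/
structure IsRegular (c : ℂ) (μ : Fin N → ℂ) (lam : Fin M → ℂ) (lp ls : ℂ) : Prop where
  injective : Function.Injective lam
  mu_ne : ∀ k j, μ k ≠ lam j
  sub_add_ne_zero : ∀ j k, lam j - lam k + I * c ≠ 0
  Vp_ne_Vm : ∀ j, Vp c μ lam (lam j) ≠ Vm c μ lam (lam j)
  Vp_ne_Vm_left : Vp c μ lam lp ≠ Vm c μ lam lp
  Vp_ne_Vm_right : Vp c μ lam ls ≠ Vm c μ lam ls
  sq_add_sq_ne_zero_left : ∀ j, (lp - lam j) ^ 2 + c ^ 2 ≠ 0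
  sq_add_sq_ne_zero_right : ∀ j, (ls - lam j) ^ 2 + c ^ 2 ≠ 0

lemma IsRegular.sq_add_sq_ne_zero {c : ℂ} {μ : Fin N → ℂ} {lam : Fin M → ℂ} {lp ls : ℂ}
    (h : IsRegular c μ lam lp ls) (j k : Fin M) : (lam j - lam k) ^ 2 + c ^ 2 ≠ 0 := by
  rw [sq_add_sq_eq_mul]
  refine mul_ne_zero (h.sub_add_ne_zero j k) fun hjk => h.sub_add_ne_zero k j ?_
  linear_combination -hjk

/-- The symmetric weights whose Laplacian is, up to a rank-one term, the matrix `1 + Umat`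
rescaled on both sides. -/
noncomputable def edgeWeight (c : ℂ) (μ : Fin N → ℂ) (lam : Fin M → ℂ) :
    Matrix (Fin M) (Fin M) ℂ :=
  of fun j k => -I * (Xi μ lam j * Xi μ lam k * Kk c (lam j) (lam k))

lemma isSymm_edgeWeight (c : ℂ) (μ : Fin N → ℂ) (lam : Fin M → ℂ) :
    (edgeWeight c μ lam).IsSymm := by
  ext j k
  simp only [edgeWeight, transpose_apply, of_apply, Kk_comm c (lam k), mul_comm (Xi μ lam k)]

lemma sum_edgeWeight (hNM : N < M) {c : ℂ} {μ : Fin N → ℂ} {lam : Fin M → ℂ} {lp ls : ℂ}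
    (h : IsRegular c μ lam lp ls) (j : Fin M) :
    ∑ k, edgeWeight c μ lam j k =
      (Vp c μ lam (lam j) - Vm c μ lam (lam j)) * Xi μ lam j := by
  have hsum := sum_Xi_mul_Kk hNM μ h.injective (h.sq_add_sq_ne_zero j)
  simp only [edgeWeight, of_apply, mul_assoc, ← mul_sum, hsum]
  linear_combination -(Vp c μ lam (lam j) - Vm c μ lam (lam j)) * Xi μ lam j * I_sq

lemma diagonal_mul_one_add_Umat_mul_diagonal (hNM : N < M) {c : ℂ} {μ : Fin N → ℂ}
    {lam : Fin M → ℂ} {lp ls : ℂ} (h : IsRegular c μ lam lp ls) :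
    diagonal (fun j => Vp c μ lam (lam j) - Vm c μ lam (lam j)) * (1 + Umat c μ lam lp ls) *
        diagonal (Xi μ lam) =
      weightedLaplacian (edgeWeight c μ lam) +
        vecMulVec (fun j => -I * (Xi μ lam j * Kk c ls (lam j)))
          (fun k => Xi μ lam k * Kk c lp (lam k)) := by
  simp only [weightedLaplacian, sum_edgeWeight hNM h]
  ext j k
  have hV := sub_ne_zero.2 (h.Vp_ne_Vm j)
  simp only [mul_diagonal, diagonal_mul, Matrix.add_apply, Matrix.sub_apply, vecMulVec_apply, Umat,
    edgeWeight, of_apply, one_apply, diagonal_apply]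
  split_ifs with hjk
  · subst hjk
    field_simp
    ring
  · field_simp
    ring

lemma prod_mul_det_one_add_Umat_div (hNn : N < n + 1) {c : ℂ} {μ : Fin N → ℂ}
    {lam : Fin (n + 1) → ℂ} {lp ls : ℂ} (h : IsRegular c μ lam lp ls) :
    (∏ j, (Vp c μ lam (lam j) - Vm c μ lam (lam j))) * (1 + Umat c μ lam lp ls).det /
        ((Vp c μ lam lp - Vm c μ lam lp) * (Vp c μ lam ls - Vm c μ lam ls)) =
      I * (cutMatrix (edgeWeight c μ lam)).det / ∏ j, Xi μ lam j := by
  have hdet := congrArg det (diagonal_mul_one_add_Umat_mul_diagonal hNn h)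
  rw [det_mul, det_mul, det_diagonal, det_diagonal,
    det_weightedLaplacian_add_vecMulVec (isSymm_edgeWeight c μ lam), ← mul_sum,
    sum_Xi_mul_Kk hNn μ h.injective h.sq_add_sq_ne_zero_left,
    sum_Xi_mul_Kk hNn μ h.injective h.sq_add_sq_ne_zero_right] at hdet
  rw [div_eq_div_iff
    (mul_ne_zero (sub_ne_zero.2 h.Vp_ne_Vm_left) (sub_ne_zero.2 h.Vp_ne_Vm_right))
    (prod_ne_zero_iff.2 fun j _ => Xi_ne_zero h.injective h.mu_ne j), hdet]
  linear_combination -I * (Vp c μ lam ls - Vm c μ lam ls) * (Vp c μ lam lp - Vm c μ lam lp) *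
    (cutMatrix (edgeWeight c μ lam)).det * I_sq

/-- The factors of `∏ j, ∏ k, (lam j - lam k + I * c)` with `k = j + 1`, which vanish on an exact
string. -/
def neighborGap (c : ℂ) (lam : Fin (n + 1) → ℂ) (a : Fin n) : ℂ :=
  lam a.castSucc - lam a.succ + I * c

/-- The factors of `∏ j, ∏ k, (lam j - lam k + I * c)` with `k ≠ j + 1`, which survive on an exact
string. -/
noncomputable def regularGapProd (c : ℂ) (lam : Fin (n + 1) → ℂ) : ℂ :=
  (∏ a : Fin n, ∏ k ∈ univ.erase a.succ, (lam a.castSucc - lam k + I * c)) *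
    ∏ k, (lam (Fin.last n) - lam k + I * c)

lemma prod_prod_sub_add_eq (c : ℂ) (lam : Fin (n + 1) → ℂ) :
    ∏ j, ∏ k, (lam j - lam k + I * c) =
      (∏ a, neighborGap c lam a) * regularGapProd c lam := by
  rw [Fin.prod_univ_castSucc, regularGapProd, ← mul_assoc, ← prod_mul_distrib]
  congr 1
  exact prod_congr rfl fun a _ => (mul_prod_erase univ _ (mem_univ a.succ)).symm

theorem HR_eq_prod_neighborGap_mul_det_cutMatrix (hNn : N < n + 1) {c : ℂ} (sc : ℂ) (R : ℕ)
    {μ : Fin N → ℂ} {lam : Fin (n + 1) → ℂ} {lp ls : ℂ} (h : IsRegular c μ lam lp ls) :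
    HR c sc R μ lam lp ls =
      (I * sc) ^ R / (c ^ (2 * R - 1) * ((R - 1).factorial : ℂ)) * (-1) ^ (N * (R - 1)) * I *
        (regularGapProd c lam * (∏ j, ∏ k, (lam j - μ k)⁻¹) *
          ((∏ a, neighborGap c lam a) * (cutMatrix (edgeWeight c μ lam)).det /
            ∏ j, Xi μ lam j)) := by
  rw [HR, prod_prod_sub_add_eq, mul_assoc _ (∏ j, (Vp c μ lam (lam j) - Vm c μ lam (lam j))),
    mul_div_assoc, prod_mul_det_one_add_Umat_div hNn h]
  ring

end ExactReduction

section String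

open Filter Topology

variable {N n : ℕ} {c z : ℂ} {μ : Fin N → ℂ}

/-- The exact string of `M` rapidities with spacing `I * c` and center `z`. -/
noncomputable def centeredString (c z : ℂ) (M : ℕ) (j : Fin M) : ℂ :=
  z + I * c * (j - (M - 1) / 2)

lemma centeredString_sub (c z : ℂ) {M : ℕ} (j k : Fin M) :
    centeredString c z M j - centeredString c z M k = I * c * (j - k) := by
  simp only [centeredString]
  ring

lemma centeredString_injective (hc : c ≠ 0) (z : ℂ) (M : ℕ) :
    Function.Injective (centeredString c z M) := by
  intro j k hjk
  have hzero : I * c * ((j : ℂ) - k) = 0 := by rw [← centeredString_sub c z, hjk, sub_self]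
  simpa [hc, sub_eq_zero, Fin.val_inj] using hzero

lemma sub_sub_centeredString_ne_zero (hc : c ≠ 0) {M : ℕ} {j k : Fin M} (hjk : j < k) :
    centeredString c z M j - centeredString c z M k - I * c ≠ 0 := by
  have hcast : (j : ℂ) ≠ k + 1 := by norm_cast; omega
  have hfactor : centeredString c z M j - centeredString c z M k - I * c =
      I * c * (j - (k + 1)) := by
    rw [centeredString_sub]; ring
  simp [hfactor, hc, sub_ne_zero.2 hcast]

lemma sub_add_centeredString_ne_zero (hc : c ≠ 0) {M : ℕ} {j k : Fin M} (hjk : (k : ℕ) ≠ j + 1) :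
    centeredString c z M j - centeredString c z M k + I * c ≠ 0 := by
  have hcast : (j + 1 : ℂ) ≠ k := by norm_cast; omega
  have hfactor : centeredString c z M j - centeredString c z M k + I * c =
      I * c * (j + 1 - k) := by
    rw [centeredString_sub]; ring
  simp [hfactor, hc, sub_ne_zero.2 hcast]

lemma neighborGap_centeredString (c z : ℂ) (a : Fin n) :
    neighborGap c (centeredString c z (n + 1)) a = 0 := by
  rw [neighborGap, centeredString_sub]
  simp

lemma continuousAt_Xi {M : ℕ} {lam : Fin M → ℂ} (hinj : Function.Injective lam) (j : Fin M) :
    ContinuousAt (fun lam => Xi μ lam j) lam := by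
  unfold Xi
  refine ContinuousAt.div (tendsto_finsetProd _ fun m _ => ?_)
    (tendsto_finsetProd _ fun m _ => ?_) (prod_ne_zero_iff.2 fun _ hm => ?_)
  · exact (continuous_const.sub (continuous_apply j)).tendsto lam
  · exact ((continuous_apply m).sub (continuous_apply j)).tendsto lam
  · exact sub_ne_zero.2 (hinj.ne (ne_of_mem_erase hm))

lemma continuousAt_edgeWeight {M : ℕ} {lam : Fin M → ℂ} (hinj : Function.Injective lam)
    {j k : Fin M} (hjk : (lam j - lam k) ^ 2 + c ^ 2 ≠ 0) :
    ContinuousAt (fun lam => edgeWeight c μ lam j k) lam := by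
  simp only [edgeWeight, of_apply, Kk]
  have hj := continuousAt_Xi (μ := μ) hinj j
  have hk := continuousAt_Xi (μ := μ) hinj k
  have hK : ContinuousAt (fun lam : Fin M → ℂ => 2 * c / ((lam j - lam k) ^ 2 + c ^ 2)) lam :=
    ContinuousAt.div (by fun_prop) (by fun_prop) hjk
  exact continuousAt_const.mul ((hj.mul hk).mul hK)

variable {l : Filter (Fin (n + 1) → ℂ)}

lemma tendsto_neighborGap_mul_edgeWeight_succ (hc : c ≠ 0)
    (hl : l ≤ 𝓝 (centeredString c z (n + 1))) (a : Fin n)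
    (hgap : ∀ᶠ lam in l, neighborGap c lam a ≠ 0) :
    Tendsto (fun lam => neighborGap c lam a * edgeWeight c μ lam a.castSucc a.succ) l
      (𝓝 (Xi μ (centeredString c z (n + 1)) a.castSucc *
        Xi μ (centeredString c z (n + 1)) a.succ)) := by
  set s := centeredString c z (n + 1) with hs
  have hden : s a.castSucc - s a.succ - I * c = -2 * I * c := by
    rw [hs, centeredString_sub]
    simp
    ring
  have hcont : ContinuousAt (fun lam : Fin (n + 1) → ℂ => -I * (Xi μ lam a.castSucc *
      Xi μ lam a.succ) * (2 * c / (lam a.castSucc - lam a.succ - I * c))) s := by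
    have hj := continuousAt_Xi (μ := μ) (centeredString_injective hc z (n + 1)) a.castSucc
    have hk := continuousAt_Xi (μ := μ) (centeredString_injective hc z (n + 1)) a.succ
    have hK : ContinuousAt (fun lam : Fin (n + 1) → ℂ =>
        2 * c / (lam a.castSucc - lam a.succ - I * c)) s :=
      ContinuousAt.div (by fun_prop) (by fun_prop) (by simp [hden, hc])
    exact (continuousAt_const.mul (hj.mul hk)).mul hK
  have hvalue : -I * (Xi μ s a.castSucc * Xi μ s a.succ) *
      (2 * c / (s a.castSucc - s a.succ - I * c)) = Xi μ s a.castSucc * Xi μ s a.succ := by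
    rw [hden]
    field_simp [I_ne_zero]
  rw [← hvalue]
  refine (hcont.tendsto.mono_left hl).congr' (hgap.mono fun lam hlam => ?_)
  simp only [neighborGap] at hlam ⊢
  rw [edgeWeight, of_apply, Kk, sq_add_sq_eq_mul, ← div_div, div_right_comm]
  field_simp

lemma tendsto_neighborGap_mul_edgeWeight_of_ne (hc : c ≠ 0)
    (hl : l ≤ 𝓝 (centeredString c z (n + 1))) (a : Fin n) {j k : Fin (n + 1)} (hjk : j < k)
    (hne : (k : ℕ) ≠ j + 1) :
    Tendsto (fun lam => neighborGap c lam a * edgeWeight c μ lam j k) l (𝓝 0) := by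
  have hgap : ContinuousAt (fun lam => neighborGap c lam a) (centeredString c z (n + 1)) := by
    unfold neighborGap
    fun_prop
  have hweight : ContinuousAt (fun lam => edgeWeight c μ lam j k) (centeredString c z (n + 1)) := by
    refine continuousAt_edgeWeight (centeredString_injective hc z _) ?_
    rw [sq_add_sq_eq_mul]
    exact mul_ne_zero (sub_add_centeredString_ne_zero hc hne)
      (sub_sub_centeredString_ne_zero hc hjk)
  have hprod : Tendsto (fun lam => neighborGap c lam a * edgeWeight c μ lam j k) l
      (𝓝 (neighborGap c (centeredString c z (n + 1)) a *
        edgeWeight c μ (centeredString c z (n + 1)) j k)) :=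
    (hgap.mul hweight).tendsto.mono_left hl
  rwa [neighborGap_centeredString, zero_mul] at hprod

lemma tendsto_neighborGap_mul_cutMatrix_edgeWeight (hc : c ≠ 0)
    (hl : l ≤ 𝓝 (centeredString c z (n + 1)))
    (hgap : ∀ a, ∀ᶠ lam in l, neighborGap c lam a ≠ 0) (a b : Fin n) :
    Tendsto (fun lam => neighborGap c lam a * cutMatrix (edgeWeight c μ lam) a b) l
      (𝓝 (diagonal (fun a => Xi μ (centeredString c z (n + 1)) a.castSucc *
        Xi μ (centeredString c z (n + 1)) a.succ) a b)) := by
  set w := fun a : Fin n =>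
    Xi μ (centeredString c z (n + 1)) a.castSucc * Xi μ (centeredString c z (n + 1)) a.succ
  have hterm : ∀ j ∈ Iic (min a.castSucc b.castSucc), ∀ k ∈ Ioi (max a.castSucc b.castSucc),
      Tendsto (fun lam => neighborGap c lam a * edgeWeight c μ lam j k) l
        (𝓝 (if j = a.castSucc ∧ k = a.succ then w a else 0)) := by
    intro j hj k hk
    rw [mem_Iic, le_inf_iff] at hj
    rw [mem_Ioi, sup_lt_iff] at hk
    split_ifs with hedge
    · rw [hedge.1, hedge.2]
      exact tendsto_neighborGap_mul_edgeWeight_succ hc hl a (hgap a)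
    · refine tendsto_neighborGap_mul_edgeWeight_of_ne hc hl a (hj.1.trans_lt hk.1) fun hsucc => ?_
      simp only [Fin.le_def, Fin.lt_def, Fin.ext_iff, Fin.val_castSucc, Fin.val_succ] at *
      omega
  have hlimit : ∑ j ∈ Iic (min a.castSucc b.castSucc), ∑ k ∈ Ioi (max a.castSucc b.castSucc),
      (if j = a.castSucc ∧ k = a.succ then w a else 0) = diagonal w a b := by
    rcases eq_or_ne a b with rfl | hab
    · rw [min_self, max_self, sum_eq_single_of_mem a.castSucc (by simp) (by simp +contextual),
        sum_eq_single_of_mem a.succ (by simp) (by simp +contextual)]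
      simp
    · rw [diagonal_apply_ne _ hab]
      refine sum_eq_zero fun j hj => sum_eq_zero fun k hk => if_neg ?_
      simp only [mem_Iic, mem_Ioi, le_inf_iff, sup_lt_iff, Fin.le_def, Fin.lt_def, Fin.ext_iff,
        Fin.val_castSucc, Fin.val_succ, ne_eq] at *
      omega
  simp only [cutMatrix, cutSum, of_apply, mul_sum, ← hlimit]
  exact tendsto_finsetSum _ fun j hj => tendsto_finsetSum _ fun k hk => hterm j hj k hk

theorem tendsto_prod_neighborGap_mul_det_cutMatrix (hc : c ≠ 0)
    (hl : l ≤ 𝓝 (centeredString c z (n + 1)))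
    (hgap : ∀ a, ∀ᶠ lam in l, neighborGap c lam a ≠ 0) :
    Tendsto (fun lam => (∏ a, neighborGap c lam a) * (cutMatrix (edgeWeight c μ lam)).det) l
      (𝓝 (∏ a : Fin n, Xi μ (centeredString c z (n + 1)) a.castSucc *
        Xi μ (centeredString c z (n + 1)) a.succ)) := by
  have hmatrix : Tendsto
      (fun lam => of fun a b => neighborGap c lam a * cutMatrix (edgeWeight c μ lam) a b) l
      (𝓝 (diagonal fun a : Fin n => Xi μ (centeredString c z (n + 1)) a.castSucc *
        Xi μ (centeredString c z (n + 1)) a.succ)) :=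
    tendsto_pi_nhds.2 fun a => tendsto_pi_nhds.2 fun b =>
      tendsto_neighborGap_mul_cutMatrix_edgeWeight hc hl hgap a b
  have hdet : Continuous fun A : Matrix (Fin n) (Fin n) ℂ => A.det := continuous_id.matrix_det
  rw [← det_diagonal]
  exact ((hdet.tendsto _).comp hmatrix).congr fun lam => det_mul_column _ _

end String

section StringConstants

variable {N n : ℕ} {c z : ℂ}

lemma prod_prod_sub_inv {K ι κ : Type*} [Field K] [Fintype ι] [Fintype κ] (a : ι → K)
    (b : κ → K) :
    ∏ j, ∏ k, (b j - a k)⁻¹ =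
      (-1) ^ (Fintype.card ι * Fintype.card κ) * (∏ j, ∏ k, (a k - b j))⁻¹ := by
  have hneg (j : κ) (k : ι) : (b j - a k)⁻¹ = -1 * (a k - b j)⁻¹ := by
    rw [← neg_sub (a k), inv_neg, neg_one_mul]
  simp only [hneg, prod_mul_distrib, prod_const, card_univ, ← pow_mul, prod_inv_distrib]

lemma prod_castSucc_mul_succ_div {K : Type*} [Field K] {f : Fin (n + 1) → K}
    (hf : ∀ a : Fin n, f a.castSucc ≠ 0) :
    (∏ a : Fin n, f a.castSucc * f a.succ) / ∏ j, f j =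
      (∏ a : Fin n, f a.succ) / f (Fin.last n) := by
  have hinit : ∏ a : Fin n, f a.castSucc ≠ 0 := prod_ne_zero_iff.2 fun a _ => hf a
  rw [prod_mul_distrib, Fin.prod_univ_castSucc f, mul_div_mul_left _ _ hinit]

lemma prod_mul_cast_sub {A : Type*} [CommRing A] (x : A) (n : ℕ) :
    ∏ k : Fin n, x * ((n : A) - (k : ℕ)) = x ^ n * (n.factorial : A) := by
  rw [prod_mul_distrib, prod_const, card_univ, Fintype.card_fin, ← Nat.descFactorial_self,
    Nat.descFactorial_eq_prod_range, Fin.prod_univ_eq_prod_range (fun k => (n : A) - k),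
    Nat.cast_prod]
  exact congrArg _ (prod_congr rfl fun k hk => (Nat.cast_sub (mem_range.1 hk).le).symm)

lemma regularGapProd_centeredString (c z : ℂ) (n : ℕ) :
    regularGapProd c (centeredString c z (n + 1)) =
      (-1) ^ n * (I * c) ^ (n + 1) * ((n + 1).factorial : ℂ) *
        ∏ a : Fin n, ∏ k ∈ univ.erase a.succ,
          (centeredString c z (n + 1) k - centeredString c z (n + 1) a.succ) := by
  set s := centeredString c z (n + 1)
  have hrow (a : Fin n) : ∏ k ∈ univ.erase a.succ, (s a.castSucc - s k + I * c) =
      (-1) ^ n * ∏ k ∈ univ.erase a.succ, (s k - s a.succ) := by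
    have hterm (k : Fin (n + 1)) : s a.castSucc - s k + I * c = -1 * (s k - s a.succ) := by
      have hgap : s a.castSucc - s a.succ + I * c = 0 := neighborGap_centeredString c z a
      linear_combination hgap
    simp only [hterm, prod_mul_distrib, prod_const, card_erase_of_mem (mem_univ _), card_univ,
      Fintype.card_fin, Nat.add_sub_cancel]
  have hlast : ∏ k, (s (Fin.last n) - s k + I * c) =
      (I * c) ^ (n + 1) * ((n + 1).factorial : ℂ) := by
    rw [← prod_mul_cast_sub]
    refine prod_congr rfl fun k _ => ?_
    rw [centeredString_sub, Fin.val_last]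
    push_cast
    ring
  have hsign : ((-1 : ℂ) ^ n) ^ n = (-1) ^ n := by
    rcases Nat.even_or_odd n with hn | hn <;> simp [hn.neg_one_pow]
  simp only [regularGapProd, hrow, hlast, prod_mul_distrib, prod_const, card_univ,
    Fintype.card_fin, hsign]
  ring

lemma prod_erase_last_centeredString_sub (c z : ℂ) (n : ℕ) :
    ∏ m ∈ univ.erase (Fin.last n),
        (centeredString c z (n + 1) m - centeredString c z (n + 1) (Fin.last n)) =
      (-(I * c)) ^ n * (n.factorial : ℂ) := by
  rw [Fin.univ_castSuccEmb, erase_cons, prod_map, ← prod_mul_cast_sub]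
  refine prod_congr rfl fun k _ => ?_
  rw [centeredString_sub, Fin.castSuccEmb_apply, Fin.val_castSucc, Fin.val_last]
  ring

lemma prod_sub_centeredString_zero_mul_last (c z : ℂ) (μ : Fin N → ℂ) (n : ℕ) :
    (∏ k, (μ k - centeredString c z (n + 1) 0)) *
        ∏ k, (μ k - centeredString c z (n + 1) (Fin.last n)) =
      ∏ k, ((μ k - z) ^ 2 + c ^ 2 / 4 * (n : ℂ) ^ 2) := by
  rw [← prod_mul_distrib]
  refine prod_congr rfl fun k _ => ?_
  simp only [centeredString, Fin.val_zero, Fin.val_last]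
  push_cast
  linear_combination -(c ^ 2 / 4 * (n : ℂ) ^ 2) * I_sq

lemma regularGapProd_mul_prod_div_prod_Xi (hc : c ≠ 0) {μ : Fin N → ℂ}
    (hμ : ∀ k j, μ k ≠ centeredString c z (n + 1) j) :
    regularGapProd c (centeredString c z (n + 1)) *
        (∏ j, ∏ k, (centeredString c z (n + 1) j - μ k)⁻¹) *
        ((∏ a : Fin n, Xi μ (centeredString c z (n + 1)) a.castSucc *
          Xi μ (centeredString c z (n + 1)) a.succ) / ∏ j, Xi μ (centeredString c z (n + 1)) j) =
      (-1) ^ (N * (n + 1)) * ((-1) ^ n * I * c ^ (2 * n + 1) * (n + 1).factorial * n.factorial) /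
        ∏ k, ((μ k - z) ^ 2 + c ^ 2 / 4 * (n : ℂ) ^ 2) := by
  set s := centeredString c z (n + 1) with hs
  have hinj : Function.Injective s := centeredString_injective hc z (n + 1)
  have hP (j) : ∏ k, (μ k - s j) ≠ 0 := prod_ne_zero_iff.2 fun k _ => sub_ne_zero.2 (hμ k j)
  have hD (j) : ∏ m ∈ univ.erase j, (s m - s j) ≠ 0 :=
    prod_ne_zero_iff.2 fun _ hm => sub_ne_zero.2 (hinj.ne (ne_of_mem_erase hm))
  have hP' : ∏ a : Fin n, ∏ k, (μ k - s a.succ) ≠ 0 := prod_ne_zero_iff.2 fun a _ => hP _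
  have hD' : ∏ a : Fin n, ∏ m ∈ univ.erase a.succ, (s m - s a.succ) ≠ 0 :=
    prod_ne_zero_iff.2 fun a _ => hD _
  have hDlast : ∏ m ∈ univ.erase (Fin.last n), (s m - s (Fin.last n)) =
      (-(I * c)) ^ n * (n.factorial : ℂ) := prod_erase_last_centeredString_sub c z n
  have hpow : (I * c) ^ (n + 1) * (-(I * c)) ^ n = I * c ^ (2 * n + 1) := by
    rw [pow_succ', mul_assoc, ← mul_pow, show I * c * -(I * c) = c ^ 2 by
      linear_combination -c ^ 2 * I_sq, ← pow_mul]
    ring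
  rw [prod_castSucc_mul_succ_div (fun a => Xi_ne_zero hinj hμ _), regularGapProd_centeredString,
    ← hs, prod_prod_sub_inv, Fin.prod_univ_succ, ← prod_sub_centeredString_zero_mul_last, ← hs]
  simp only [Xi, prod_div_distrib, hDlast, Fintype.card_fin]
  have h0 := hP 0
  have hlast := hP (Fin.last n)
  field_simp
  linear_combination ((n + 1).factorial * n.factorial : ℂ) * hpow

lemma HR_prefactor_mul_regularGapProd_mul_eq {r : ℕ} (hc : c ≠ 0) (sc : ℂ) {μ : Fin N → ℂ}
    (hμ : ∀ k j, μ k ≠ centeredString c z (N + r + 1) j) :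
    (I * sc) ^ (r + 1) / (c ^ (2 * r + 1) * (r.factorial : ℂ)) * (-1) ^ (N * r) * I *
        (regularGapProd c (centeredString c z (N + r + 1)) *
          (∏ j, ∏ k, (centeredString c z (N + r + 1) j - μ k)⁻¹) *
          ((∏ a : Fin (N + r), Xi μ (centeredString c z (N + r + 1)) a.castSucc *
            Xi μ (centeredString c z (N + r + 1)) a.succ) /
            ∏ j, Xi μ (centeredString c z (N + r + 1)) j)) =
      (-1) ^ (N + r + 1) * (I * sc) ^ (r + 1) * c ^ (2 * N) *
        ((N + r + 1 : ℂ) / (r.factorial : ℂ)) * ((N + r).factorial : ℂ) ^ 2 /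
        ∏ k, ((μ k - z) ^ 2 + c ^ 2 / 4 * (N + r : ℂ) ^ 2) := by
  have hsign : (-1 : ℂ) ^ (N * r) * (-1) ^ (N * (N + r + 1)) = 1 := by
    rw [← pow_add, show N * r + N * (N + r + 1) = N * (N + 1) + 2 * (N * r) by ring]
    exact ((Nat.even_mul_succ_self N).add (even_two_mul _)).neg_one_pow
  have hfactorial : (r.factorial : ℂ) ≠ 0 := Nat.cast_ne_zero.2 r.factorial_ne_zero
  rw [regularGapProd_mul_prod_div_prod_Xi hc hμ, Nat.factorial_succ]
  push_cast
  generalize ∏ k, ((μ k - z) ^ 2 + c ^ 2 / 4 * (N + r : ℂ) ^ 2) = P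
  field_simp
  linear_combination (I * sc) ^ (r + 1) * (-1) ^ (N + r) * c ^ (2 * (N + r) + 1) * (N + r + 1) *
    (N + r).factorial ^ 2 / P *
    ((-1) ^ (N * r) * (-1) ^ (N * (N + r + 1)) * I_sq - hsign)

end StringConstants

section Limit

open Filter Topology

variable {N n : ℕ} {c z : ℂ} {μ : Fin N → ℂ}

lemma IsRegular.neighborGap_ne_zero {lam : Fin (n + 1) → ℂ} {lp ls : ℂ}
    (h : IsRegular c μ lam lp ls) (a : Fin n) : neighborGap c lam a ≠ 0 :=
  h.sub_add_ne_zero _ _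

lemma continuous_regularGapProd (c : ℂ) (n : ℕ) :
    Continuous fun lam : Fin (n + 1) → ℂ => regularGapProd c lam := by
  unfold regularGapProd
  fun_prop

lemma tendsto_HR_of_le_nhds_centeredString {r : ℕ} {l : Filter (Fin (N + r + 1) → ℂ)}
    (hc : c ≠ 0) (sc : ℂ) (hμ : ∀ k j, μ k ≠ centeredString c z (N + r + 1) j) {lp ls : ℂ}
    (hl : l ≤ 𝓝 (centeredString c z (N + r + 1)))
    (hreg : ∀ᶠ lam in l, IsRegular c μ lam lp ls) :
    Tendsto (fun lam => HR c sc (r + 1) μ lam lp ls) l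
      (𝓝 ((-1) ^ (N + r + 1) * (I * sc) ^ (r + 1) * c ^ (2 * N) *
        ((N + r + 1 : ℂ) / (r.factorial : ℂ)) * ((N + r).factorial : ℂ) ^ 2 /
        ∏ k, ((μ k - z) ^ 2 + c ^ 2 / 4 * (N + r : ℂ) ^ 2))) := by
  rw [← HR_prefactor_mul_regularGapProd_mul_eq hc sc hμ]
  set s := centeredString c z (N + r + 1)
  have hinj : Function.Injective s := centeredString_injective hc z _
  have hgaps : Tendsto (fun lam => regularGapProd c lam) l (𝓝 (regularGapProd c s)) :=
    ((continuous_regularGapProd c (N + r)).tendsto s).mono_left hl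
  have hmu : Tendsto (fun lam : Fin (N + r + 1) → ℂ => ∏ j, ∏ k, (lam j - μ k)⁻¹) l
      (𝓝 (∏ j, ∏ k, (s j - μ k)⁻¹)) :=
    tendsto_finsetProd _ fun j _ => tendsto_finsetProd _ fun k _ =>
      ((((continuous_apply j).tendsto s).mono_left hl).sub_const _).inv₀
        (sub_ne_zero.2 (hμ k j).symm)
  have hXi : Tendsto (fun lam => ∏ j, Xi μ lam j) l (𝓝 (∏ j, Xi μ s j)) :=
    tendsto_finsetProd _ fun j _ => (continuousAt_Xi hinj j).tendsto.mono_left hl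
  have hdet := tendsto_prod_neighborGap_mul_det_cutMatrix (μ := μ) hc hl fun a =>
    hreg.mono fun lam h => h.neighborGap_ne_zero a
  have hXi_ne : ∏ j, Xi μ s j ≠ 0 := prod_ne_zero_iff.2 fun j _ => Xi_ne_zero hinj hμ j
  refine (((hgaps.mul hmu).mul (hdet.div hXi hXi_ne)).const_mul _).congr' ?_
  exact hreg.mono fun lam h =>
    (HR_eq_prod_neighborGap_mul_det_cutMatrix (by omega) sc (r + 1) h).symm

lemma stringRap_zero (cb : ℝ) (M : ℕ) : stringRap cb M 0 = centeredString (-cb) 0 M := by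
  ext j
  simp only [stringRap, centeredString, Pi.zero_apply]
  ring

lemma continuous_stringRap (cb : ℝ) (M : ℕ) : Continuous (stringRap cb M) := by
  unfold stringRap
  fun_prop

lemma tendsto_stringRap (cb : ℝ) (M : ℕ) :
    Tendsto (stringRap cb M) (𝓝 0) (𝓝 (centeredString (-cb) 0 M)) := by
  rw [← stringRap_zero]
  exact (continuous_stringRap cb M).tendsto 0

lemma I_mul_sqrt_sq {x : ℝ} (hx : 0 ≤ x) : (I * (Real.sqrt x : ℂ)) ^ 2 = -(x : ℂ) := by
  rw [mul_pow, I_sq, ← ofReal_pow, Real.sq_sqrt hx, neg_one_mul]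

lemma I_mul_sqrt_ne_zero {x : ℝ} (hx : 0 < x) : I * (Real.sqrt x : ℂ) ≠ 0 :=
  mul_ne_zero I_ne_zero (ofReal_ne_zero.2 (Real.sqrt_ne_zero'.2 hx))

end Limit

end LL

open Filter Topology in
theorem HR_string_limit_general {N R : ℕ} (hR : 1 ≤ R) {c sc : ℂ} (hsc : sc ^ 2 = c)
    (hsc₀ : sc ≠ 0) (z : ℂ) {μ : Fin N → ℂ} (hμ : ∀ k j, μ k ≠ centeredString c z (N + R) j)
    (lp ls : ℂ) :
    Tendsto (fun lam => HR c sc R μ lam lp ls)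
      (𝓝[{lam | IsRegular c μ lam lp ls}] centeredString c z (N + R))
      (𝓝 ((-1 : ℂ) ^ (N + R) * (I * sc) ^ R * c ^ (2 * N) *
        ((N + R : ℂ) / ((R - 1).factorial : ℂ)) * ((N + R - 1).factorial : ℂ) ^ 2 /
        ∏ m, ((μ m - z) ^ 2 + c ^ 2 / 4 * ((N + R : ℂ) - 1) ^ 2))) := by
  have hc : c ≠ 0 := hsc ▸ pow_ne_zero 2 hsc₀
  obtain ⟨r, rfl⟩ := Nat.exists_eq_add_of_le' hR
  rw [Nat.cast_succ, ← add_assoc (N : ℂ), add_sub_cancel_right]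
  exact tendsto_HR_of_le_nhds_centeredString hc sc hμ nhdsWithin_le_nhds self_mem_nhdsWithin

/-- Attractive-regime (vanishing string deviation) limit of the determinant formula `H_R`
for the form factor of `Ψ^R(0)` between the `M`-string ground state (`M = N+R`,
`c = −c̄ < 0`, `√c = i√c̄`) and a state with rapidities `μ₁,…,μ_N`. -/
theorem HR_string_limit {N R : ℕ} (hR : 1 ≤ R) (cb : ℝ) (hcb : 0 < cb)
    (c sc : ℂ) (hcdef : c = -(cb : ℂ)) (hscdef : sc = I * (Real.sqrt cb : ℂ))
    (μ : Fin N → ℂ)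
    (hmu1 : ∀ m : Fin N,
      μ m ^ 2 + (cb : ℂ) ^ 2 / 4 * ((N + R : ℂ) - 1) ^ 2 ≠ 0)
    (hmu2 : ∀ (k : Fin N) (j : Fin (N + R)), μ k ≠ stringRap cb (N + R) 0 j)
    (lp ls : ℂ)
    (hp1 : ∀ j, (lp - stringRap cb (N + R) 0 j) ^ 2 + c ^ 2 ≠ 0)
    (hs1 : ∀ j, (ls - stringRap cb (N + R) 0 j) ^ 2 + c ^ 2 ≠ 0) :
    Filter.Tendsto
      (fun δ : Fin (N + R) → ℂ => HR c sc R μ (stringRap cb (N + R) δ) lp ls)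
      (nhdsWithin 0
        {δ : Fin (N + R) → ℂ |
          Function.Injective (stringRap cb (N + R) δ) ∧
          (∀ k j, μ k ≠ stringRap cb (N + R) δ j) ∧
          (∀ j k, stringRap cb (N + R) δ j - stringRap cb (N + R) δ k + I * c ≠ 0 ∧
            stringRap cb (N + R) δ j - stringRap cb (N + R) δ k - I * c ≠ 0) ∧
          (∀ j, Vp c μ (stringRap cb (N + R) δ) (stringRap cb (N + R) δ j) ≠
            Vm c μ (stringRap cb (N + R) δ) (stringRap cb (N + R) δ j)) ∧
          Vp c μ (stringRap cb (N + R) δ) lp ≠ Vm c μ (stringRap cb (N + R) δ) lp ∧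
          Vp c μ (stringRap cb (N + R) δ) ls ≠ Vm c μ (stringRap cb (N + R) δ) ls ∧
          (∀ j, (lp - stringRap cb (N + R) δ j) ^ 2 + c ^ 2 ≠ 0) ∧
          (∀ j, (ls - stringRap cb (N + R) δ j) ^ 2 + c ^ 2 ≠ 0)})
      (nhds ((-1 : ℂ) ^ (N + R) * (I * sc) ^ R * c ^ (2 * N) *
        ((N + R : ℂ) / ((R - 1).factorial : ℂ)) * (((N + R - 1).factorial : ℂ)) ^ 2 /
        ∏ m : Fin N, (μ m ^ 2 + (cb : ℂ) ^ 2 / 4 * ((N + R : ℂ) - 1) ^ 2))) := by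
  subst hcdef hscdef
  simp only [stringRap_zero] at hmu2
  have hlimit := HR_string_limit_general hR (I_mul_sqrt_sq hcb.le) (I_mul_sqrt_ne_zero hcb) 0 hmu2
    lp ls
  simp only [sub_zero, neg_sq] at hlimit
  refine hlimit.comp (tendsto_nhdsWithin_iff.2
    ⟨(tendsto_stringRap cb (N + R)).mono_left nhdsWithin_le_nhds, ?_⟩)
  filter_upwards [self_mem_nhdsWithin] with δ ⟨hinj, hμ, hgap, hV, hVp, hVs, hp, hs⟩
  exact ⟨hinj, hμ, fun j k => (hgap j k).1, hV, hVp, hVs, hp, hs⟩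
end
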